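/- Let G be a finite group and N a normal subgroup with N° ≠ ∅, where N° = N \ ⋃{M normal in G : M < N} M. Then for every g ∈ N°, we have N = ⋂_{χ ∈ Irr(G), χ(g)=χ(1)} ker χ and K_g = N°, where K_g = {h ∈ G : {χ : χ(h)≠χ(1)} = {χ : χ(g)≠χ(1)}}. -/

import Mathlib

/-- `χ : G → ℂ` is an irreducible character: the character of a simple
finite-dimensional complex representation of `G`. -/
def IsIrrChar (G : Type) [Monoid G] (χ : G → ℂ) : Prop :=
  ∃ V : FDRep ℂ G, CategoryTheory.Simple V ∧ V.character = χ

/-- `E_g = {χ ∈ Irr(G) : χ(g) ≠ χ(1)}`. -/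
def Eset (G : Type) [Monoid G] (g : G) : Set (G → ℂ) :=
  {χ : G → ℂ | IsIrrChar G χ ∧ χ g ≠ χ 1}

/-- `K_g = {h ∈ G : E_h = E_g}`. -/
def Kset (G : Type) [Monoid G] (g : G) : Set G :=
  {h : G | Eset G h = Eset G g}

/-! For every `g`, both `⋂_{χ(g) = χ(1)} ker χ` and `{h | E_h ⊆ E_g}` are the normal closure of `g`.
Indeed, eigenvalues of an operator of finite order are roots of unity, so its trace equals the
dimension only if it is the identity; hence `{x | χ(x) = χ(1)}` is the kernel of a representation
affording `χ`, a normal subgroup, and it contains the normal closure of `g` as soon as it contains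
`g`. Conversely, if `h ∉ M` with `M` normal, then `h` acts nontrivially on the regular
representation of `G / M`, hence, by semisimplicity, on some irreducible quotient of it.
Finally, the elements of `N°` are exactly those whose normal closure is `N`. -/

open CategoryTheory
open scoped MonoidAlgebra

universe u

section Endomorphism

open Module Polynomial

theorem pow_eq_one_of_hasEigenvalue {R M : Type*} [CommRing R] [IsDomain R] [AddCommGroup M]
    [Module R M] [IsTorsionFree R M] {f : End R M} {n : ℕ} (hf : f ^ n = 1) {μ : R}
    (hμ : f.HasEigenvalue μ) : μ ^ n = 1 := by
  obtain ⟨v, hv⟩ := (hμ.pow n).exists_hasEigenvector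
  refine smul_left_injective R hv.2 ?_
  simpa [hf] using hv.apply_eq_smul.symm

variable {K V : Type*} [Field K] [AddCommGroup V] [Module K V]

theorem isSemisimple_of_pow_eq_one {f : End K V} {n : ℕ} (hn : (n : K) ≠ 0) (hf : f ^ n = 1) :
    f.IsSemisimple :=
  End.isSemisimple_of_squarefree_aeval_eq_zero
    (separable_X_pow_sub_C (1 : K) hn one_ne_zero).squarefree (by simp [hf])

theorem eq_algebraMap_of_isSemisimple_of_forall_hasEigenvalue [IsAlgClosed K]
    [FiniteDimensional K V] {f : End K V} (hf : f.IsSemisimple) {c : K}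
    (h : ∀ μ : K, f.HasEigenvalue μ → μ = c) : f = algebraMap K (End K V) c := by
  have hsub : (f - algebraMap K (End K V) c).IsSemisimple :=
    End.isSemisimple_sub_algebraMap_iff.2 hf
  refine sub_eq_zero.1 (hsub.eq_zero_iff_forall_eigenvalue.2 fun μ hμ => ?_)
  rw [algebraMap_end_eq_smul_id, End.hasEigenvalue_sub_iff] at hμ
  simpa using h _ hμ

end Endomorphism

section Trace

open Module

theorem eq_one_of_norm_eq_one_of_sum_eq_card {s : Multiset ℂ} (hs : ∀ z ∈ s, ‖z‖ = 1)
    (hsum : s.sum = s.card) {z : ℂ} (hz : z ∈ s) : z = 1 := by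
  have hle : ∀ w ∈ s, w.re ≤ 1 := fun w hw => hs w hw ▸ w.re_le_norm
  have hsum_re : (s.map Complex.re).sum = s.card := by
    simpa [map_multiset_sum] using congrArg Complex.reAddGroupHom hsum
  have hre : z.re = 1 := by
    refine (hle z hz).eq_of_not_lt fun hlt => ?_
    have := Multiset.sum_lt_sum hle ⟨z, hz, hlt⟩
    simp [hsum_re] at this
  have him : z.im = 0 := Complex.abs_re_eq_norm.1 (by rw [hre, hs z hz, abs_one])
  exact Complex.ext hre him

variable {V : Type*} [AddCommGroup V] [Module ℂ V] [FiniteDimensional ℂ V]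

theorem eq_one_of_isOfFinOrder_of_trace_eq_finrank {f : End ℂ V} (hf : IsOfFinOrder f)
    (htr : LinearMap.trace ℂ V f = finrank ℂ V) : f = 1 := by
  obtain ⟨n, hn, hfn⟩ := hf.exists_pow_eq_one
  have hsplits : f.charpoly.Splits := IsAlgClosed.splits _
  have hcard : f.charpoly.roots.card = finrank ℂ V := by
    rw [← hsplits.natDegree_eq_card_roots, f.charpoly_natDegree]
  have hsum : f.charpoly.roots.sum = f.charpoly.roots.card := by
    rw [← End.trace_eq_sum_roots_charpoly_of_splits hsplits, htr, hcard]
  have hnorm : ∀ z ∈ f.charpoly.roots, ‖z‖ = 1 := fun z hz =>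
    Complex.norm_eq_one_of_pow_eq_one (pow_eq_one_of_hasEigenvalue hfn
      ((f.hasEigenvalue_iff_isRoot_charpoly z).2 (Polynomial.isRoot_of_mem_roots hz))) hn.ne'
  have hss : f.IsSemisimple := isSemisimple_of_pow_eq_one (Nat.cast_ne_zero.2 hn.ne') hfn
  rw [← map_one (algebraMap ℂ (End ℂ V))]
  refine eq_algebraMap_of_isSemisimple_of_forall_hasEigenvalue hss fun μ hμ => ?_
  exact eq_one_of_norm_eq_one_of_sum_eq_card hnorm hsum
    ((Polynomial.mem_roots f.charpoly_monic.ne_zero).2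
      ((f.hasEigenvalue_iff_isRoot_charpoly μ).1 hμ))

theorem character_eq_character_one_iff {G : Type*} [Monoid G] (ρ : Representation ℂ G V) {g : G}
    (hg : IsOfFinOrder g) : ρ.character g = ρ.character 1 ↔ ρ g = 1 := by
  refine ⟨fun h => ?_, fun h => by simp only [Representation.character, h, map_one]⟩
  exact eq_one_of_isOfFinOrder_of_trace_eq_finrank (ρ.isOfFinOrder hg) (h.trans ρ.char_one)

end Trace

theorem exists_isCoatom_notMem {R M : Type*} [Ring R] [AddCommGroup M] [Module R M]
    [IsSemisimpleModule R M] {x : M} (hx : x ≠ 0) : ∃ N : Submodule R M, IsCoatom N ∧ x ∉ N := by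
  contrapose! hx
  rw [← Submodule.mem_bot R, ← IsSemisimpleModule.jacobson_eq_bot R M, Module.jacobson,
    Submodule.mem_sInf]
  exact hx

section QuotientRepresentation

variable {k G V : Type*} [Monoid G] [Field k] [AddCommGroup V] [Module k V]
  {ρ : Representation k G V}

theorem exists_isCoatom_subrepresentation_notMem [hρ : ρ.IsSemisimpleRepresentation] {v : V}
    (hv : v ≠ 0) : ∃ T : Subrepresentation ρ, IsCoatom T ∧ v ∉ T := by
  have : IsSemisimpleModule k[G] ρ.asModule :=
    ρ.isSemisimpleRepresentation_iff_isSemisimpleModule_asModule.1 hρ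
  obtain ⟨N, hN, hvN⟩ := exists_isCoatom_notMem (R := k[G]) (x := ρ.asModuleEquiv.symm v) (by simpa)
  exact ⟨_, (Subrepresentation.subrepresentationSubmoduleOrderIso.symm.isCoatom_iff N).2 hN, hvN⟩

/-- The quotient of a representation by a subrepresentation, as a representation on the quotient
vector space; its irreducibility is governed by the position of `T` in the lattice of
subrepresentations. -/
abbrev quotientRepresentation (T : Subrepresentation ρ) : Representation k G (V ⧸ T.toSubmodule) :=
  ρ.quotient T.toSubmodule T.apply_mem_toSubmodule

/-- The correspondence theorem for representations: subrepresentations of the quotient by `T`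
correspond to subrepresentations containing `T`, here encoded as the interval `Set.Ici T`. It turns
maximality of `T` into irreducibility of the quotient. -/
def subrepresentationQuotientOrderIso (T : Subrepresentation ρ) :
    Subrepresentation (quotientRepresentation T) ≃o Set.Ici T where
  toFun U := ⟨⟨U.toSubmodule.comap T.toSubmodule.mkQ,
      fun g _ hv => U.apply_mem_toSubmodule g hv⟩,
    T.toSubmodule.le_comap_mkQ U.toSubmodule⟩
  invFun U := ⟨U.1.toSubmodule.map T.toSubmodule.mkQ, by
    rintro g _ ⟨v, hv, rfl⟩
    exact ⟨ρ g v, U.1.apply_mem_toSubmodule g hv, rfl⟩⟩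
  left_inv U := Subrepresentation.toSubmodule_injective
    (Submodule.map_comap_eq_of_surjective T.toSubmodule.mkQ_surjective _)
  right_inv U := Subtype.ext <| Subrepresentation.toSubmodule_injective <|
    (Submodule.comap_map_mkQ _ _).trans (sup_eq_right.2 U.2)
  map_rel_iff' := Submodule.comap_le_comap_iff_of_surjective T.toSubmodule.mkQ_surjective

theorem isIrreducible_quotientRepresentation {T : Subrepresentation ρ} (hT : IsCoatom T) :
    (quotientRepresentation T).IsIrreducible :=
  (subrepresentationQuotientOrderIso T).isSimpleOrder_iff.2
    (Set.isSimpleOrder_Ici_iff_isCoatom.2 hT)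

theorem exists_isIrreducible_quotientRepresentation_ne_one [ρ.IsSemisimpleRepresentation] {g : G}
    (hg : ρ g ≠ 1) : ∃ T : Subrepresentation ρ,
      (quotientRepresentation T).IsIrreducible ∧ quotientRepresentation T g ≠ 1 := by
  obtain ⟨v, hv⟩ := DFunLike.ne_iff.1 hg
  obtain ⟨T, hT, hvT⟩ := exists_isCoatom_subrepresentation_notMem (ρ := ρ) (sub_ne_zero.2 hv)
  refine ⟨T, isIrreducible_quotientRepresentation hT, fun h => hvT ?_⟩
  exact (Submodule.Quotient.eq _).1 (LinearMap.congr_fun h (Submodule.Quotient.mk v))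

end QuotientRepresentation

theorem simple_fdRep_of {k G V : Type u} [Field k] [IsAlgClosed k] [Group G] [Finite G]
    [NeZero (Nat.card G : k)] [AddCommGroup V] [Module k V] [FiniteDimensional k V]
    (ρ : Representation k G V) [ρ.IsIrreducible] : Simple (FDRep.of ρ) := by
  rw [FDRep.simple_iff_end_is_rank_one, ← (FDRep.forget₂HomLinearEquiv _ _).finrank_eq,
    (Rep.homLinearEquiv _ _).finrank_eq]
  exact Representation.IsIrreducible.finrank_intertwiningMap_self ρ

theorem leftRegular_ne_one {k G : Type*} [CommSemiring k] [Nontrivial k] [Monoid G] {g : G}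
    (hg : g ≠ 1) : Representation.leftRegular k G g ≠ 1 := fun h => hg <| by
  have := LinearMap.congr_fun h (MonoidAlgebra.single 1 1)
  simpa [Representation.ofMulAction_single, MonoidAlgebra.single_left_inj] using this

theorem exists_simple_fdRep_le_ker_notMem_ker {k G : Type u} [Field k] [IsAlgClosed k] [Group G]
    [Finite G] [NeZero (Nat.card G : k)] (N : Subgroup G) [N.Normal] {h : G} (hh : h ∉ N) :
    ∃ V : FDRep k G, Simple V ∧ N ≤ MonoidHom.ker V.ρ ∧ h ∉ MonoidHom.ker V.ρ := by
  let ρ : Representation k G k[G ⧸ N] :=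
    (Representation.leftRegular k (G ⧸ N)).comp (QuotientGroup.mk' N)
  have hρh : ρ h ≠ 1 := leftRegular_ne_one (mt (QuotientGroup.eq_one_iff h).1 hh)
  have hρN : ∀ n ∈ N, ρ n = 1 := fun n hn => by
    simp [ρ, (QuotientGroup.eq_one_iff n).2 hn]
  obtain ⟨T, hT, hTh⟩ := exists_isIrreducible_quotientRepresentation_ne_one hρh
  refine ⟨FDRep.of (quotientRepresentation T), simple_fdRep_of _, fun n hn => ?_, hTh⟩
  refine LinearMap.ext fun x => ?_
  obtain ⟨v, rfl⟩ := Submodule.Quotient.mk_surjective _ x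
  exact congrArg Submodule.Quotient.mk (LinearMap.congr_fun (hρN n hn) v)

section NormalClosure

variable {G : Type*} [Group G]

theorem normalClosure_singleton_le_iff {g : G} {N : Subgroup G} [N.Normal] :
    Subgroup.normalClosure {g} ≤ N ↔ g ∈ N := by
  rw [← Subgroup.normalClosure_subset_iff, Set.singleton_subset_iff, SetLike.mem_coe]

theorem mem_diff_iUnion_normal_lt_iff {N : Subgroup G} [N.Normal] {g : G} :
    g ∈ (N : Set G) \ ⋃ M ∈ {M : Subgroup G | M.Normal ∧ M < N}, (M : Set G) ↔
      Subgroup.normalClosure {g} = N := by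
  constructor
  · rintro ⟨hg, hgM⟩
    refine (normalClosure_singleton_le_iff.2 hg).eq_of_not_lt fun hlt => hgM ?_
    exact Set.mem_biUnion (x := Subgroup.normalClosure {g})
      ⟨Subgroup.normalClosure_normal, hlt⟩ (Subgroup.subset_normalClosure rfl)
  · rintro rfl
    refine ⟨Subgroup.subset_normalClosure rfl, fun hgM => ?_⟩
    obtain ⟨M, ⟨hM, hlt⟩, hg⟩ := Set.mem_iUnion₂.1 hgM
    exact hlt.not_ge (normalClosure_singleton_le_iff.2 hg)

end NormalClosure

section IrrChar

variable {G : Type} [Group G] [Finite G]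

theorem IsIrrChar.exists_normal_mem_iff {χ : G → ℂ} (hχ : IsIrrChar G χ) :
    ∃ K : Subgroup G, K.Normal ∧ ∀ g, g ∈ K ↔ χ g = χ 1 := by
  obtain ⟨V, -, rfl⟩ := hχ
  exact ⟨MonoidHom.ker V.ρ, inferInstance, fun g =>
    (character_eq_character_one_iff V.ρ (isOfFinOrder_of_finite g)).symm⟩

theorem exists_isIrrChar_ne_of_notMem (N : Subgroup G) [N.Normal] {h : G} (hh : h ∉ N) :
    ∃ χ, IsIrrChar G χ ∧ (∀ n ∈ N, χ n = χ 1) ∧ χ h ≠ χ 1 := by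
  obtain ⟨V, hV, hVN, hVh⟩ := exists_simple_fdRep_le_ker_notMem_ker (k := ℂ) N hh
  have hker (g : G) : V.character g = V.character 1 ↔ V.ρ g = 1 :=
    character_eq_character_one_iff V.ρ (isOfFinOrder_of_finite g)
  exact ⟨V.character, ⟨V, hV, rfl⟩, fun n hn => (hker n).2 (hVN hn), mt (hker h).1 hVh⟩

theorem Eset_subset_Eset_iff {g h : G} :
    Eset G h ⊆ Eset G g ↔ h ∈ Subgroup.normalClosure {g} := by
  constructor
  · intro hE
    by_contra hh
    obtain ⟨χ, hχ, hχg, hχh⟩ := exists_isIrrChar_ne_of_notMem _ hh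
    exact (hE ⟨hχ, hχh⟩).2 (hχg g (Subgroup.subset_normalClosure rfl))
  · rintro hh χ ⟨hχ, hχh⟩
    obtain ⟨K, _, hK⟩ := hχ.exists_normal_mem_iff
    refine ⟨hχ, fun hχg => hχh ((hK h).1 ?_)⟩
    exact normalClosure_singleton_le_iff.2 ((hK g).2 hχg) hh

theorem Eset_eq_Eset_iff {g h : G} :
    Eset G h = Eset G g ↔ Subgroup.normalClosure {h} = Subgroup.normalClosure {g} := by
  simp only [Eset_subset_Eset_iff, le_antisymm_iff,
    normalClosure_singleton_le_iff]

theorem iInter_ker_eq_normalClosure (g : G) :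
    (⋂ χ ∈ {χ : G → ℂ | IsIrrChar G χ ∧ χ g = χ 1}, {h : G | χ h = χ 1}) =
      (Subgroup.normalClosure {g} : Set G) := by
  ext h
  rw [SetLike.mem_coe, ← Eset_subset_Eset_iff, Set.mem_iInter₂]
  refine forall_congr' fun χ => ?_
  simp only [Eset, Set.mem_ofPred_eq]
  tauto

end IrrChar

/-- if `N` is normal and `N° ≠ ∅`, then for every `g ∈ N°` we have
`N = ⋂_{χ(g)=χ(1)} ker χ` and `K_g = N°`. -/
theorem circ_eq_Kset {G : Type} [Group G] [Fintype G] (N : Subgroup G)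
    (hN : N.Normal)
    (hne : ((N : Set G) \
      ⋃ M ∈ {M : Subgroup G | M.Normal ∧ M < N}, (M : Set G)) ≠ ∅) :
    ∀ g ∈ (N : Set G) \
        ⋃ M ∈ {M : Subgroup G | M.Normal ∧ M < N}, (M : Set G),
      (N : Set G) =
          (⋂ χ ∈ {χ : G → ℂ | IsIrrChar G χ ∧ χ g = χ 1}, {h : G | χ h = χ 1}) ∧
        Kset G g =
          (N : Set G) \
            ⋃ M ∈ {M : Subgroup G | M.Normal ∧ M < N}, (M : Set G) := by
  intro g hg
  have hgN : Subgroup.normalClosure {g} = N := mem_diff_iUnion_normal_lt_iff.1 hg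
  refine ⟨by rw [iInter_ker_eq_normalClosure, hgN], Set.ext fun h => ?_⟩
  rw [mem_diff_iUnion_normal_lt_iff, ← hgN]
  exact Eset_eq_Eset_iff
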